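/- Let Ω be a finite discrete sample space, α ∈ ℝ∖{1}, and X, Y finite discrete random variables on Ω. Then for every probability measure P on Ω, the Tsallis α-entropy satisfies the chain rule I₁^α(XY;P) = I₁^α(X;P) + ∑_{x∈E_X} P_X(x)^α · I₁^α(Y; P|_{X=x}). -/

import Mathlib

/-!
For each `x`, the joint law factors as `P_XY(x, y) = P_X(x) · P|_{X=x}(Y = y)` (both sides vanish
when `P_X(x) = 0`), so multiplicativity of `t ↦ t ^ α` on nonnegative reals gives
`∑_y P_XY(x, y)^α = P_X(x)^α · ∑_y P|_{X=x}(Y = y)^α`. Summing over `x`, adding and subtracting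
`∑_x P_X(x)^α` and dividing by `1 - α` yields the chain rule. The factorisation also makes atoms
with `P_X(x) = 0` harmless for every exponent, including `α ≤ 0` with the convention `0 ^ 0 = 1`.
-/


open scoped Classical

noncomputable section

/-- `P` is a probability mass function on the finite space `Ω`. -/
def IsPMF {Ω : Type*} [Fintype Ω] (P : Ω → ℝ) : Prop :=
  (∀ ω, 0 ≤ P ω) ∧ ∑ ω, P ω = 1

/-- The law (push-forward) `P_X(x) = P(X⁻¹(x))` of `X` under `P`. -/
def rvLaw {Ω E : Type*} [Fintype Ω] (X : Ω → E) (P : Ω → ℝ) : E → ℝ :=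
  fun x => ∑ ω, if X ω = x then P ω else 0

/-- The conditional probability measure `P|_{X=x}`, defined as `P` itself when
`P_X(x) = 0`. -/
def pmfCond {Ω E : Type*} [Fintype Ω] (X : Ω → E) (x : E) (P : Ω → ℝ) :
    Ω → ℝ :=
  if rvLaw X P x = 0 then P
  else fun ω => (if X ω = x then P ω else 0) / rvLaw X P x

/-- The Tsallis `α`-entropy `(∑_x μ(x)^α − 1)/(1 − α)` of a finite
probability mass function. -/
def tsallisEntropy {E : Type*} [Fintype E] (α : ℝ) (μ : E → ℝ) : ℝ :=
  ((∑ x, μ x ^ α) - 1) / (1 - α)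

theorem rvLaw_nonneg {Ω E : Type*} [Fintype Ω] (X : Ω → E) {P : Ω → ℝ}
    (hP : ∀ ω, 0 ≤ P ω) (x : E) : 0 ≤ rvLaw X P x :=
  Finset.sum_nonneg fun ω _ => by split_ifs <;> simp [hP ω]

theorem pmfCond_nonneg {Ω E : Type*} [Fintype Ω] (X : Ω → E) (x : E) {P : Ω → ℝ}
    (hP : ∀ ω, 0 ≤ P ω) (ω : Ω) : 0 ≤ pmfCond X x P ω := by
  unfold pmfCond
  split_ifs with h
  · exact hP ω
  · refine div_nonneg ?_ (rvLaw_nonneg X hP x)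
    split_ifs <;> simp [hP ω]

/-- Nonnegativity of `P` makes it vanish on the fibre `X = x` when `P_X(x) = 0`, so the
factorisation holds for null `x` too. -/
theorem rvLaw_prod_eq_mul {Ω EX EY : Type*} [Fintype Ω] (X : Ω → EX) (Y : Ω → EY)
    {P : Ω → ℝ} (hP : ∀ ω, 0 ≤ P ω) (x : EX) (y : EY) :
    rvLaw (fun ω => (X ω, Y ω)) P (x, y) = rvLaw X P x * rvLaw Y (pmfCond X x P) y := by
  by_cases h : rvLaw X P x = 0
  · rw [h, zero_mul]
    have h0 : ∀ ω, (if X ω = x then P ω else 0) = 0 := fun ω =>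
      (Finset.sum_eq_zero_iff_of_nonneg
        (fun ω _ => by split_ifs <;> simp [hP ω])).1 h ω (Finset.mem_univ ω)
    refine Finset.sum_eq_zero fun ω _ => ?_
    have := h0 ω
    by_cases hx : X ω = x <;> simp_all
  · unfold pmfCond
    rw [if_neg h]
    conv_rhs => rw [rvLaw.eq_def Y]
    rw [Finset.mul_sum, rvLaw.eq_def (fun ω => (X ω, Y ω))]
    refine Finset.sum_congr rfl fun ω _ => ?_
    by_cases hx : X ω = x <;> by_cases hy : Y ω = y <;> simp [hx, hy, mul_div_cancel₀, h]

/-- Chain rule for Tsallis `α`-entropy: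
`I₁^α(XY;P) = I₁^α(X;P) + ∑_x P_X(x)^α · I₁^α(Y;P|_{X=x})`. -/
theorem stmt18 {Ω EX EY : Type*} [Fintype Ω] [Fintype EX] [Fintype EY]
    (α : ℝ) (hα : α ≠ 1) (X : Ω → EX) (Y : Ω → EY)
    (P : Ω → ℝ) (hP : IsPMF P) :
    tsallisEntropy α (rvLaw (fun ω => (X ω, Y ω)) P)
      = tsallisEntropy α (rvLaw X P)
        + ∑ x : EX, rvLaw X P x ^ α * tsallisEntropy α (rvLaw Y (pmfCond X x P)) := by
  unfold tsallisEntropy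
  have key : ∑ z : EX × EY, rvLaw (fun ω => (X ω, Y ω)) P z ^ α
      = ∑ x, rvLaw X P x ^ α * ∑ y, rvLaw Y (pmfCond X x P) y ^ α := by
    rw [Fintype.sum_prod_type]
    refine Finset.sum_congr rfl fun x _ => ?_
    rw [Finset.mul_sum]
    refine Finset.sum_congr rfl fun y _ => ?_
    rw [rvLaw_prod_eq_mul X Y hP.1, Real.mul_rpow (rvLaw_nonneg X hP.1 x)
      (rvLaw_nonneg Y (pmfCond_nonneg X x hP.1) y)]
  simp only [← mul_div_assoc, ← Finset.sum_div, mul_sub, mul_one, Finset.sum_sub_distrib]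
  rw [key, ← add_div]
  ring
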